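/- Suppose the quadrature nodes and weights satisfy the vanishing-moment condition. Then for every λ ∈ ℂ with λ ≠ 0 and λ ≠ z_j for all j, every integer p ≥ 1, and every integer k with 0 ≤ k ≤ N + p − 2, the identity Σ_{j=1}^N ω_j z_j^k / (z_j − λ)^p = λ^k Σ_{j=1}^N [ω_j / (z_j − λ)^p] · Σ_{q=0}^{p−1} C(k,q) ((z_j − λ)/λ)^q holds, where C(k,q) denotes the binomial coefficient (equal to 0 when q > k). -/

import Mathlib

/-!
Write `f = q * g + r` with `r = f %ₘ q`, so that `f / q = g + r / q` at every node. If `deg f`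
exceeds `deg q` by less than the number of vanishing moments, the quadrature rule kills `g`, hence
it cannot distinguish `f / q` from `r / q`. For `q = (X - λ) ^ p` the remainder is the Taylor
polynomial of `f` at `λ` of degree less than `p`, and for `f = X ^ k` its coefficients are given by
the binomial theorem.
-/

open Finset Polynomial

theorem modByMonic_X_sub_C_pow_eq_sum_taylor {R : Type*} [CommRing R] (f : R[X]) (r : R) (n : ℕ) :
    f %ₘ (X - C r) ^ n = ∑ i ∈ range n, C ((taylor r f).coeff i) * (X - C r) ^ i := by
  nontriviality R
  have hmonic : ((X - C r) ^ n).Monic := (monic_X_sub_C r).pow n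
  set T := ∑ i ∈ range n, C ((taylor r f).coeff i) * (X - C r) ^ i with hT
  have htaylor_pow : ∀ i, taylor r ((X - C r) ^ i) = X ^ i := fun i => by
    rw [taylor_pow, map_sub, taylor_X, taylor_C, add_sub_cancel_right]
  have htaylor_T : taylor r T = ∑ i ∈ range n, C ((taylor r f).coeff i) * X ^ i := by
    simp only [hT, map_sum, taylor_mul, taylor_C, htaylor_pow]
  have hdegree : T.degree < ((X - C r) ^ n).degree := by
    rw [← degree_taylor T r, ← degree_taylor ((X - C r) ^ n) r, htaylor_T, htaylor_pow,
      degree_X_pow, ← Fin.sum_univ_eq_sum_range fun i => C ((taylor r f).coeff i) * X ^ i]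
    exact degree_sum_fin_lt _
  have hdvd : (X - C r) ^ n ∣ f - T := by
    suffices taylor r ((X - C r) ^ n) ∣ taylor r (f - T) from (map_dvd_iff (taylorEquiv r)).1 this
    rw [htaylor_pow, map_sub, htaylor_T, X_pow_dvd_iff]
    intro i hi
    simp [hi]
  rw [modByMonic_eq_of_dvd_sub hmonic hdvd, (modByMonic_eq_self_iff hmonic).2 hdegree]

theorem degree_divByMonic_lt_of_degree_lt_add {R : Type*} [Ring R] {f q : R[X]} (hq : q.Monic)
    {m : ℕ} (hf : f.degree < q.degree + m) : (f /ₘ q).degree < m := by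
  nontriviality R
  rcases lt_or_ge f.degree q.degree with hlt | hle
  · rw [(divByMonic_eq_zero_iff hq).2 hlt, degree_zero]
    exact WithBot.bot_lt_coe m
  · rw [← degree_add_divByMonic hq hle] at hf
    exact lt_of_add_lt_add_left hf

theorem sum_mul_eval_eq_zero_of_moments_eq_zero {R ι : Type*} [CommSemiring R] {s : Finset ι}
    {ω z : ι → R} {m : ℕ} (hω : ∀ i < m, ∑ j ∈ s, ω j * z j ^ i = 0) {g : R[X]}
    (hg : g.degree < m) : ∑ j ∈ s, ω j * g.eval (z j) = 0 := by
  calc ∑ j ∈ s, ω j * g.eval (z j)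
      = ∑ i ∈ g.support, g.coeff i * ∑ j ∈ s, ω j * z j ^ i := by
        simp only [eval_eq_sum, Polynomial.sum, mul_sum, mul_left_comm]
        exact sum_comm
    _ = 0 := sum_eq_zero fun i hi => by
        rw [hω i (by exact_mod_cast (le_degree_of_mem_supp i hi).trans_lt hg), mul_zero]

section Field

variable {K ι : Type*} [Field K] {s : Finset ι} {ω z : ι → K} {m : ℕ}

theorem sum_mul_eval_div_eq_sum_mul_eval_modByMonic_div
    (hω : ∀ i < m, ∑ j ∈ s, ω j * z j ^ i = 0) {f q : K[X]} (hq : q.Monic)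
    (hqz : ∀ j ∈ s, q.eval (z j) ≠ 0) (hf : f.degree < q.degree + m) :
    ∑ j ∈ s, ω j * f.eval (z j) / q.eval (z j) =
      ∑ j ∈ s, ω j * (f %ₘ q).eval (z j) / q.eval (z j) := by
  have hsplit : ∀ j ∈ s, ω j * f.eval (z j) / q.eval (z j) =
      ω j * (f %ₘ q).eval (z j) / q.eval (z j) + ω j * (f /ₘ q).eval (z j) := fun j hj => by
    have hne := hqz j hj
    conv_lhs => rw [← modByMonic_add_div f q, eval_add, eval_mul]
    field_simp
  have hquotient : ∑ j ∈ s, ω j * (f /ₘ q).eval (z j) = 0 :=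
    sum_mul_eval_eq_zero_of_moments_eq_zero hω (degree_divByMonic_lt_of_degree_lt_add hq hf)
  rw [sum_congr rfl hsplit, sum_add_distrib, hquotient, add_zero]

theorem eval_X_pow_modByMonic_X_sub_C_pow {a : K} (ha : a ≠ 0) (x : K) (k p : ℕ) :
    ((X ^ k : K[X]) %ₘ (X - C a) ^ p).eval x =
      a ^ k * ∑ q ∈ range p, (k.choose q : K) * ((x - a) / a) ^ q := by
  simp only [modByMonic_X_sub_C_pow_eq_sum_taylor, taylor_X_pow, coeff_X_add_C_pow, eval_finsetSum,
    eval_mul, eval_C, eval_pow, eval_sub, eval_X, mul_sum]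
  refine sum_congr rfl fun q _ => ?_
  rcases le_or_gt q k with hqk | hkq
  · rw [pow_sub₀ a ha hqk, div_pow]
    ring
  · simp only [Nat.choose_eq_zero_of_lt hkq, Nat.cast_zero, mul_zero, zero_mul]

theorem stmt_2_general (hω : ∀ i < m, ∑ j ∈ s, ω j * z j ^ i = 0) {a : K} (ha : a ≠ 0)
    (haz : ∀ j ∈ s, a ≠ z j) {p k : ℕ} (hk : k < p + m) :
    ∑ j ∈ s, ω j * z j ^ k / (z j - a) ^ p =
      a ^ k * ∑ j ∈ s, (ω j / (z j - a) ^ p) *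
        ∑ q ∈ range p, (k.choose q : K) * ((z j - a) / a) ^ q := by
  have heval : ∀ j, ((X - C a) ^ p).eval (z j) = (z j - a) ^ p := fun j => by
    rw [eval_pow, eval_sub, eval_X, eval_C]
  have hne : ∀ j ∈ s, ((X - C a) ^ p).eval (z j) ≠ 0 := fun j hj => by
    rw [heval]
    exact pow_ne_zero p (sub_ne_zero.2 (haz j hj).symm)
  have hdegree : (X ^ k : K[X]).degree < ((X - C a) ^ p).degree + m := by
    rw [degree_X_pow, degree_pow, degree_X_sub_C, nsmul_one]
    exact_mod_cast hk
  have hreduce := sum_mul_eval_div_eq_sum_mul_eval_modByMonic_div hω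
    ((monic_X_sub_C a).pow p) hne hdegree
  simp only [heval, eval_X_pow_modByMonic_X_sub_C_pow ha, eval_pow, eval_X] at hreduce
  rw [hreduce, mul_sum]
  exact sum_congr rfl fun j _ => by ring

end Field

/-- Proposition 2 of the paper: under the vanishing-moment
condition, for `λ ≠ 0` with `λ ≠ z_j` for all `j`, every `p ≥ 1` and
`0 ≤ k ≤ N + p − 2`,
`∑_j ω_j z_j^k/(z_j−λ)^p = λ^k ∑_j [ω_j/(z_j−λ)^p] ∑_{q=0}^{p−1} C(k,q) ((z_j−λ)/λ)^q`. -/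
theorem stmt_2 (N : ℕ) (z omega : Fin N → ℂ)
    (hvm : ∀ k : ℕ, k + 2 ≤ N → ∑ j, omega j * z j ^ k = 0)
    (lam : ℂ) (hlam0 : lam ≠ 0) (hlamz : ∀ j, lam ≠ z j)
    (p : ℕ) (hp : 1 ≤ p) (k : ℕ) (hk : k + 2 ≤ N + p) :
    ∑ j, omega j * z j ^ k / (z j - lam) ^ p =
      lam ^ k * ∑ j, (omega j / (z j - lam) ^ p) *
        ∑ q ∈ Finset.range p, (k.choose q : ℂ) * ((z j - lam) / lam) ^ q := by
  exact stmt_2_general (m := N - 1) (fun i hi => hvm i (by omega)) hlam0 (fun j _ => hlamz j)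
    (by omega)
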